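/- Let n ≥ 3. A tree with boundary G has the Faber-Krahn property in the class T^{(n,·)} of all trees with boundary with n vertices (with arbitrary number of interior vertices) if and only if G is a path with n vertices, and G is then uniquely determined up to isomorphism. -/

import Mathlib

/-!
Common definitions for Faber-Krahn type inequalities for trees
(Bıyıkoğlu–Leydold, "Faber-Krahn Type Inequalities for Trees").

A *tree (graph) with boundary* is a finite simple connected graph in which
boundary vertices are exactly the vertices of degree 1 and interior vertices
are the vertices of degree ≥ 2; both sets are required to be nonempty.
The Dirichlet operator is the Laplacian restricted to functions vanishing on
the boundary; `dirichletLambda` is its smallest eigenvalue.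
-/

open Finset
open scoped Classical

noncomputable section

namespace FK

variable {V : Type*} [Fintype V] [DecidableEq V]

/-- A vertex is a boundary vertex iff it has degree `1`. -/
def IsBoundary (G : SimpleGraph V) (v : V) : Prop := G.degree v = 1

/-- A vertex is an interior vertex iff it has degree at least `2`. -/
def IsInterior (G : SimpleGraph V) (v : V) : Prop := 2 ≤ G.degree v

/-- A tree with boundary: a tree with at least one interior and
one boundary vertex. -/
def IsTreeWithBoundary (G : SimpleGraph V) : Prop :=
  G.IsTree ∧ (∃ v, IsInterior G v) ∧ (∃ v, IsBoundary G v)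

/-- A connected graph with boundary: every vertex is either a boundary vertex
(degree 1) or an interior vertex (degree ≥ 2), both kinds occur, and no edge
joins two boundary vertices. -/
def IsGraphWithBoundary (G : SimpleGraph V) : Prop :=
  G.Connected ∧ (∀ v, IsBoundary G v ∨ IsInterior G v) ∧
    (∃ v, IsInterior G v) ∧ (∃ v, IsBoundary G v) ∧
    (∀ v w, G.Adj v w → IsBoundary G v → ¬ IsBoundary G w)

/-- The finset of interior vertices. -/
def interiorFinset (G : SimpleGraph V) : Finset V := univ.filter (fun v => IsInterior G v)

/-- The finset of boundary vertices. -/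
def boundaryFinset (G : SimpleGraph V) : Finset V := univ.filter (fun v => IsBoundary G v)

/-- The degree sequence of `G`, as a multiset. -/
def degreeMultiset (G : SimpleGraph V) : Multiset ℕ := Finset.univ.val.map (fun v => G.degree v)

/-- The graph Laplacian `Δ = D - A` applied to a function `f : V → ℝ`. -/
def lapApply (G : SimpleGraph V) (f : V → ℝ) (v : V) : ℝ :=
  (G.degree v : ℝ) * f v - ∑ w ∈ G.neighborFinset v, f w

/-- `f` (vanishing on the boundary, nonzero) is an eigenfunction of the
Dirichlet operator `Δ₀` with eigenvalue `μ`: the eigenvalue equation holds at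
every interior vertex. -/
def IsDirichletEigenpair (G : SimpleGraph V) (μ : ℝ) (f : V → ℝ) : Prop :=
  f ≠ 0 ∧ (∀ v, IsBoundary G v → f v = 0) ∧
    ∀ v, IsInterior G v → lapApply G f v = μ * f v

/-- The first (smallest) Dirichlet eigenvalue `λ(G)`. -/
def dirichletLambda (G : SimpleGraph V) : ℝ :=
  sInf {μ : ℝ | ∃ f : V → ℝ, IsDirichletEigenpair G μ f}

/-- The quadratic form `⟨Δ f, f⟩ = Σ_{(u,v)∈E} (f u - f v)²` of the Laplacian
(each edge counted once). -/
def quadForm (G : SimpleGraph V) (f : V → ℝ) : ℝ :=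
  (∑ v, ∑ w ∈ G.neighborFinset v, (f v - f w) ^ 2) / 2

/-- The Rayleigh quotient `R_G(f)`. -/
def rayleigh (G : SimpleGraph V) (f : V → ℝ) : ℝ :=
  quadForm G f / ∑ v, f v ^ 2

/-- `w` is a child of `v` in the tree `G` rooted at `v₀`
(heights are distances from the root `v₀`). -/
def IsChild (G : SimpleGraph V) (v₀ v w : V) : Prop :=
  G.Adj v w ∧ G.dist v₀ w = G.dist v₀ v + 1

/-- A spiral-like ordering (SLO-ordering) of the vertices of the tree `G`
rooted at `v₀`: a (strict) well-ordering `lt` satisfying (S1)-(S3). -/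
def IsSLOOrdering (G : SimpleGraph V) (v₀ : V) (lt : V → V → Prop) : Prop :=
  IsStrictTotalOrder V lt ∧
  (∀ v w, lt v w → G.dist v₀ v ≤ G.dist v₀ w) ∧
  (∀ v₁ v₂ w₁ w₂, lt v₁ v₂ → IsChild G v₀ v₁ w₁ → IsChild G v₀ v₂ w₂ → lt w₁ w₂) ∧
  (∀ v w, lt v w → IsBoundary G v → IsBoundary G w)

/-- A spiral-like ordering with increasing degrees (SLO*-ordering):
additionally (S4). -/
def IsSLOStarOrdering (G : SimpleGraph V) (v₀ : V) (lt : V → V → Prop) : Prop :=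
  IsSLOOrdering G v₀ lt ∧
  ∀ v w, lt v w → IsInterior G v → IsInterior G w → G.degree v ≤ G.degree w

/-- An SLO-tree: a tree with boundary admitting an SLO-ordering. -/
def IsSLOTree (G : SimpleGraph V) : Prop :=
  IsTreeWithBoundary G ∧ ∃ (v₀ : V) (lt : V → V → Prop), IsSLOOrdering G v₀ lt

/-- An SLO*-tree: a tree with boundary admitting an SLO*-ordering. -/
def IsSLOStarTree (G : SimpleGraph V) : Prop :=
  IsTreeWithBoundary G ∧ ∃ (v₀ : V) (lt : V → V → Prop), IsSLOStarOrdering G v₀ lt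

end FK

namespace FK

/-!
Let `N` be the number of edges of the tree and `θ = π / N`. Removing an edge `vw` leaves the branch
at `v` in direction `w`, with `s` vertices say, and the branch at `w` in direction `v`, with
`N + 1 - s` vertices. Give `(v, w)` the weight
`sin ((s - 1) θ) / sin (s θ) = cos θ - sin θ cot (s θ)`, a quotient of consecutive values of the
eigenfunction `k ↦ sin (k θ)` of the path. The weights of `(v, w)` and `(w, v)` are
inverse to each other when both ends are interior. Completing the square on every edge therefore
shows that each Dirichlet eigenvalue is at least `μ` as soon as the weights at every interior
vertex `v` add up to at most `deg v - μ`.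

The branches at `v` have `N` vertices in total, so their angles `s θ` add up to `π`, and the
cotangents of at least two positive angles with sum `π` have a nonnegative sum. Hence the weights
at `v` add up to at most `deg v * cos θ ≤ deg v - (2 - 2 cos θ)`, with strict inequality if
`deg v ≥ 3`. This gives the lower bound `2 - 2 cos θ`, which the path attains. If another tree
attained it, the eigenfunction would vanish at a vertex of degree at least `3`, and the squares on
the edges would then propagate its zeros over the whole tree.
-/

section Trigonometry

lemma cot_add_cot_nonneg {x y : ℝ} (hx : 0 < x) (hy : 0 < y) (hxy : x + y ≤ Real.pi) :
    0 ≤ Real.cot x + Real.cot y := by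
  have hsx : 0 < Real.sin x := Real.sin_pos_of_pos_of_lt_pi hx (by linarith)
  have hsy : 0 < Real.sin y := Real.sin_pos_of_pos_of_lt_pi hy (by linarith)
  have hcot : Real.cot x + Real.cot y = Real.sin (x + y) / (Real.sin x * Real.sin y) := by
    rw [Real.cot_eq_cos_div_sin, Real.cot_eq_cos_div_sin, Real.sin_add]
    field_simp
    ring
  rw [hcot]
  exact div_nonneg (Real.sin_nonneg_of_nonneg_of_le_pi (by linarith) hxy) (by positivity)

lemma sum_cot_nonneg {ι : Type*} {s : Finset ι} {x : ι → ℝ} (hs : 1 < #s)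
    (hpos : ∀ i ∈ s, 0 < x i) (hsum : ∑ i ∈ s, x i ≤ Real.pi) :
    0 ≤ ∑ i ∈ s, Real.cot (x i) := by
  obtain ⟨j, hj, hmax⟩ := s.exists_max_image x (card_pos.1 (by omega))
  obtain ⟨k, hk⟩ : (s.erase j).Nonempty := card_pos.1 (by rw [card_erase_of_mem hj]; omega)
  have hpair : ∀ i ∈ s.erase j, x j + x i ≤ Real.pi := fun i hi =>
    calc x j + x i ≤ x j + ∑ l ∈ s.erase j, x l :=
          add_le_add_right (single_le_sum (fun l hl => (hpos l (mem_of_mem_erase hl)).le) hi) _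
      _ = ∑ l ∈ s, x l := add_sum_erase s x hj
      _ ≤ Real.pi := hsum
  have hcot : ∀ i ∈ s.erase j, 0 ≤ Real.cot (x i) := fun i hi => by
    have his := mem_of_mem_erase hi
    have := cot_add_cot_nonneg (hpos i his) (hpos i his)
      (by linarith [hmax i his, hpair i hi])
    linarith
  calc 0 ≤ Real.cot (x j) + Real.cot (x k) :=
        cot_add_cot_nonneg (hpos j hj) (hpos k (mem_of_mem_erase hk)) (hpair k hk)
    _ ≤ Real.cot (x j) + ∑ i ∈ s.erase j, Real.cot (x i) :=
        add_le_add_right (single_le_sum hcot hk) _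
    _ = ∑ i ∈ s, Real.cot (x i) := add_sum_erase s (fun i => Real.cot (x i)) hj

lemma sin_sub_div_sin {x : ℝ} (hx : Real.sin x ≠ 0) (y : ℝ) :
    Real.sin (x - y) / Real.sin x = Real.cos y - Real.sin y * Real.cot x := by
  rw [Real.sin_sub, Real.cot_eq_cos_div_sin]
  field_simp

end Trigonometry

section Geodesics

variable {V : Type*} {G : SimpleGraph V} {v w : V}

lemma exists_adj_dist_add_one_eq (hG : G.Connected) (h : v ≠ w) :
    ∃ a, G.Adj v a ∧ G.dist a w + 1 = G.dist v w := by
  obtain ⟨p, hp⟩ := hG.exists_walk_length_eq_dist v w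
  cases p with
  | nil => exact absurd rfl h
  | @cons _ a _ hva q =>
    refine ⟨a, hva, le_antisymm ?_ ?_⟩
    · rw [← hp, SimpleGraph.Walk.length_cons]
      exact Nat.add_le_add_right (SimpleGraph.dist_le q) 1
    · have := hG.dist_triangle (u := v) (v := a) (w := w)
      rwa [SimpleGraph.dist_eq_one_iff_adj.2 hva, add_comm] at this

lemma eq_of_adj_of_dist_add_one_eq (hG : G.IsTree) {a b : V} (ha : G.Adj v a) (hb : G.Adj v b)
    (haw : G.dist a w + 1 = G.dist v w) (hbw : G.dist b w + 1 = G.dist v w) : a = b := by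
  obtain ⟨p, hp⟩ := hG.connected.exists_walk_length_eq_dist a w
  obtain ⟨q, hq⟩ := hG.connected.exists_walk_length_eq_dist b w
  have hp' : (p.cons ha).IsPath := SimpleGraph.Walk.isPath_of_length_eq_dist _ (by simp [hp, haw])
  have hq' : (q.cons hb).IsPath := SimpleGraph.Walk.isPath_of_length_eq_dist _ (by simp [hq, hbw])
  have h : p.cons ha = q.cons hb :=
    congrArg Subtype.val ((hG.isAcyclic.subsingleton_path v w).elim ⟨_, hp'⟩ ⟨_, hq'⟩)
  simpa using congrArg SimpleGraph.Walk.snd h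

end Geodesics

section Branches

variable {V : Type*} [Fintype V] {G : SimpleGraph V} {v w : V}

/-- The vertices that are closer to `w` than to `v`. For an edge `vw` of a tree this is the
component of `w` after removal of the edge, that is, the branch at `v` in direction `w`. -/
def branch (G : SimpleGraph V) (v w : V) : Finset V := {u | G.dist w u < G.dist v u}

lemma mem_branch {u : V} : u ∈ branch G v w ↔ G.dist w u < G.dist v u := by
  simp [branch]

lemma card_branch_pos (h : G.Adj v w) : 0 < #(branch G v w) :=
  card_pos.2 ⟨w, mem_branch.2 (by simp [SimpleGraph.dist_eq_one_iff_adj.2 h])⟩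

lemma card_branch_add_card_branch_swap (hG : G.IsTree) (h : G.Adj v w) :
    #(branch G v w) + #(branch G w v) = Fintype.card V := by
  have hcompl : branch G w v = (branch G v w)ᶜ := by
    ext u
    have hne : G.dist v u ≠ G.dist w u := by
      rw [G.dist_comm (u := v), G.dist_comm (u := w)]
      exact hG.dist_ne_of_adj u h
    rw [mem_compl, mem_branch, mem_branch, not_lt]
    exact ⟨le_of_lt, fun h => lt_of_le_of_ne h hne⟩
  rw [hcompl, card_add_card_compl]

lemma mem_branch_iff_of_adj (hG : G.Connected) (h : G.Adj v w) {u : V} :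
    u ∈ branch G v w ↔ G.dist w u + 1 = G.dist v u := by
  have := hG.dist_triangle (u := v) (v := w) (w := u)
  rw [SimpleGraph.dist_eq_one_iff_adj.2 h] at this
  rw [mem_branch]
  omega

lemma existsUnique_adj_mem_branch (hG : G.IsTree) {u : V} (h : v ≠ u) :
    ∃! w, G.Adj v w ∧ u ∈ branch G v w := by
  obtain ⟨w, hvw, hw⟩ := exists_adj_dist_add_one_eq hG.connected h
  refine ⟨w, ⟨hvw, (mem_branch_iff_of_adj hG.connected hvw).2 hw⟩, fun x ⟨hvx, hx⟩ => ?_⟩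
  exact eq_of_adj_of_dist_add_one_eq hG hvx hvw
    ((mem_branch_iff_of_adj hG.connected hvx).1 hx) hw

lemma sum_card_branch (hG : G.IsTree) (v : V) :
    ∑ w ∈ G.neighborFinset v, #(branch G v w) + 1 = Fintype.card V := by
  have hdisj : (G.neighborFinset v : Set V).PairwiseDisjoint (branch G v) := by
    intro a ha b hb hab
    rw [mem_coe, SimpleGraph.mem_neighborFinset] at ha hb
    refine disjoint_left.2 fun u hua hub => hab ?_
    have huv : v ≠ u := by rintro rfl; simp [mem_branch] at hua
    exact (existsUnique_adj_mem_branch hG huv).unique ⟨ha, hua⟩ ⟨hb, hub⟩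
  have hunion : (G.neighborFinset v).biUnion (branch G v) = univ.erase v := by
    ext u
    simp only [mem_biUnion, SimpleGraph.mem_neighborFinset, mem_erase, mem_univ, and_true]
    refine ⟨?_, fun h => (existsUnique_adj_mem_branch hG (Ne.symm h)).exists⟩
    rintro ⟨w, -, hw⟩ rfl
    simp [mem_branch] at hw
  rw [← card_biUnion hdisj, hunion, card_erase_add_one (mem_univ v), card_univ]

lemma card_branch_add_one_lt (hG : G.IsTree) (hv : IsInterior G v) (h : G.Adj v w) :
    #(branch G v w) + 1 < Fintype.card V := by
  obtain ⟨x, hx, hxw⟩ := exists_mem_ne (s := G.neighborFinset v)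
    (by rwa [SimpleGraph.card_neighborFinset_eq_degree]) w
  have hle : ∑ y ∈ {w, x}, #(branch G v y) ≤ ∑ y ∈ G.neighborFinset v, #(branch G v y) :=
    sum_le_sum_of_subset (insert_subset (by simpa using h) (singleton_subset_iff.2 hx))
  rw [sum_pair hxw.symm] at hle
  have := sum_card_branch hG v
  have := card_branch_pos ((G.mem_neighborFinset v x).1 hx)
  omega

end Branches

section BranchWeights

variable {V : Type*} [Fintype V] {G : SimpleGraph V} {v w : V}

/-- The angle `π / N`, where `N` is the number of edges of a tree with vertex set `V`; the path
with vertex set `V` has the Dirichlet eigenfunction `k ↦ sin (k * stepAngle V)`. -/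
def stepAngle (V : Type*) [Fintype V] : ℝ := Real.pi / (Fintype.card V - 1)

/-- The size of the branch at `v` in direction `w`, measured in multiples of `stepAngle V`. -/
def branchAngle (G : SimpleGraph V) (v w : V) : ℝ := #(branch G v w) * stepAngle V

/-- The weight of the oriented edge `(v, w)`: the quotient `sin ((s - 1) θ) / sin (s θ)` of values
of the path eigenfunction, where `s` is the size of the branch at `v` in direction `w`. -/
def branchWeight (G : SimpleGraph V) (v w : V) : ℝ :=
  Real.sin (branchAngle G v w - stepAngle V) / Real.sin (branchAngle G v w)

variable [Nontrivial V]

lemma card_sub_one_mul_stepAngle :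
    (Fintype.card V - 1) * stepAngle V = Real.pi := by
  have h : (1 : ℝ) < Fintype.card V := by exact_mod_cast Fintype.one_lt_card
  exact mul_div_cancel₀ _ (by linarith)

lemma stepAngle_pos : 0 < stepAngle V := by
  have h : (1 : ℝ) < Fintype.card V := by exact_mod_cast Fintype.one_lt_card
  exact div_pos Real.pi_pos (by linarith)

lemma stepAngle_le_pi : stepAngle V ≤ Real.pi := by
  have h : (2 : ℝ) ≤ Fintype.card V := by exact_mod_cast Fintype.one_lt_card
  exact div_le_self Real.pi_pos.le (by linarith)

lemma stepAngle_le_branchAngle (h : G.Adj v w) :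
    stepAngle V ≤ branchAngle G v w := by
  have hcard : (1 : ℝ) ≤ #(branch G v w) := by exact_mod_cast card_branch_pos h
  exact le_mul_of_one_le_left stepAngle_pos.le hcard

lemma branchAngle_add_branchAngle_swap (hG : G.IsTree) (h : G.Adj v w) :
    branchAngle G v w + branchAngle G w v = Real.pi + stepAngle V := by
  have hcard : (#(branch G v w) + #(branch G w v) : ℝ) = Fintype.card V := by
    exact_mod_cast card_branch_add_card_branch_swap hG h
  rw [branchAngle, branchAngle, ← add_mul, hcard, ← card_sub_one_mul_stepAngle (V := V)]
  ring

lemma sum_branchAngle (hG : G.IsTree) (v : V) :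
    ∑ w ∈ G.neighborFinset v, branchAngle G v w = Real.pi := by
  have hcard : ((∑ w ∈ G.neighborFinset v, #(branch G v w) : ℕ) : ℝ) + 1 = Fintype.card V := by
    exact_mod_cast sum_card_branch hG v
  rw [← card_sub_one_mul_stepAngle (V := V), ← hcard, Nat.cast_sum, add_sub_cancel_right, sum_mul]
  rfl

lemma branchAngle_lt_pi (hG : G.IsTree) (hv : IsInterior G v) (h : G.Adj v w) :
    branchAngle G v w < Real.pi := by
  have hcard : (#(branch G v w) + 1 : ℝ) < Fintype.card V := by
    exact_mod_cast card_branch_add_one_lt hG hv h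
  rw [← card_sub_one_mul_stepAngle (V := V), branchAngle]
  exact mul_lt_mul_of_pos_right (by linarith) stepAngle_pos

lemma sin_branchAngle_pos (hG : G.IsTree) (hv : IsInterior G v)
    (h : G.Adj v w) : 0 < Real.sin (branchAngle G v w) :=
  Real.sin_pos_of_pos_of_lt_pi (stepAngle_pos.trans_le (stepAngle_le_branchAngle h))
    (branchAngle_lt_pi hG hv h)

lemma branchWeight_nonneg (hG : G.IsTree) (hv : IsInterior G v)
    (h : G.Adj v w) : 0 ≤ branchWeight G v w := by
  refine div_nonneg (Real.sin_nonneg_of_nonneg_of_le_pi ?_ ?_) (sin_branchAngle_pos hG hv h).le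
  · exact sub_nonneg.2 (stepAngle_le_branchAngle h)
  · linarith [branchAngle_lt_pi hG hv h, stepAngle_pos (V := V)]

lemma branchWeight_mul_branchWeight_swap (hG : G.IsTree) (hv : IsInterior G v)
    (hw : IsInterior G w) (h : G.Adj v w) : branchWeight G v w * branchWeight G w v = 1 := by
  have hsum := branchAngle_add_branchAngle_swap hG h
  have hsin : Real.sin (branchAngle G w v) = Real.sin (branchAngle G v w - stepAngle V) := by
    rw [← Real.sin_pi_sub]
    congr 1
    linarith
  have hsin' : Real.sin (branchAngle G w v - stepAngle V) = Real.sin (branchAngle G v w) := by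
    rw [← Real.sin_pi_sub]
    congr 1
    linarith
  have hw_pos := sin_branchAngle_pos hG hw h.symm
  rw [hsin] at hw_pos
  rw [branchWeight, branchWeight, hsin, hsin',
    div_mul_div_cancel₀ (sin_branchAngle_pos hG hv h).ne', div_self hw_pos.ne']

lemma sum_branchWeight_le (hG : G.IsTree) (hv : IsInterior G v) :
    ∑ w ∈ G.neighborFinset v, branchWeight G v w ≤ G.degree v * Real.cos (stepAngle V) := by
  have hcot : 0 ≤ ∑ w ∈ G.neighborFinset v, Real.cot (branchAngle G v w) := by
    refine sum_cot_nonneg ?_ (fun w hw => ?_) (sum_branchAngle hG v).le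
    · rwa [SimpleGraph.card_neighborFinset_eq_degree]
    · rw [SimpleGraph.mem_neighborFinset] at hw
      exact stepAngle_pos.trans_le (stepAngle_le_branchAngle hw)
  have hsin : 0 ≤ Real.sin (stepAngle V) :=
    Real.sin_nonneg_of_nonneg_of_le_pi stepAngle_pos.le stepAngle_le_pi
  calc ∑ w ∈ G.neighborFinset v, branchWeight G v w
      = ∑ w ∈ G.neighborFinset v,
          (Real.cos (stepAngle V) - Real.sin (stepAngle V) * Real.cot (branchAngle G v w)) :=
        sum_congr rfl fun w hw => sin_sub_div_sin
          (sin_branchAngle_pos hG hv ((G.mem_neighborFinset v w).1 hw)).ne' _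
    _ = G.degree v * Real.cos (stepAngle V)
          - Real.sin (stepAngle V) * ∑ w ∈ G.neighborFinset v, Real.cot (branchAngle G v w) := by
        rw [sum_sub_distrib, sum_const, nsmul_eq_mul, SimpleGraph.card_neighborFinset_eq_degree,
          ← mul_sum]
    _ ≤ G.degree v * Real.cos (stepAngle V) := sub_le_self _ (mul_nonneg hsin hcot)

lemma cos_stepAngle_lt_one : Real.cos (stepAngle V) < 1 := by
  rw [← Real.cos_zero]
  exact Real.cos_lt_cos_of_nonneg_of_le_pi le_rfl stepAngle_le_pi stepAngle_pos

end BranchWeights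

section BartaWeights

/-- A certificate for the lower bound `μ` on the Dirichlet eigenvalues. It generalises Barta's
criterion: when `a v w = φ w / φ v` for a positive function `φ`, the last field says that
`Δ φ ≥ μ φ` at the interior vertices. -/
structure IsBartaWeight {V : Type*} [Fintype V] (G : SimpleGraph V) (μ : ℝ) (a : V → V → ℝ) :
    Prop where
  nonneg : ∀ {v w}, G.Adj v w → IsInterior G v → 0 ≤ a v w
  one_le_mul_swap : ∀ {v w}, G.Adj v w → IsInterior G v → IsInterior G w → 1 ≤ a v w * a w v
  sum_le : ∀ {v}, IsInterior G v → ∑ w ∈ G.neighborFinset v, a v w ≤ G.degree v - μ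

lemma two_mul_mul_le_of_one_le_mul {a b : ℝ} (ha : 0 ≤ a) (hab : 1 ≤ a * b) (x y : ℝ) :
    2 * (x * y) ≤ a * x ^ 2 + b * y ^ 2 := by
  have ha' : 0 < a := ha.lt_of_ne (by rintro rfl; linarith)
  have hsq : a * (a * x ^ 2 + b * y ^ 2 - 2 * (x * y))
      = (a * x - y) ^ 2 + (a * b - 1) * y ^ 2 := by ring
  have hmul : 0 ≤ a * (a * x ^ 2 + b * y ^ 2 - 2 * (x * y)) := by
    rw [hsq]
    exact add_nonneg (sq_nonneg _) (mul_nonneg (by linarith) (sq_nonneg y))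
  linarith [nonneg_of_mul_nonneg_right hmul ha']

variable {V : Type*} [Fintype V] {G : SimpleGraph V} {lam μ : ℝ} {f : V → ℝ} {a : V → V → ℝ}

lemma sum_neighborFinset_comm (G : SimpleGraph V) (F : V → V → ℝ) :
    ∑ v, ∑ w ∈ G.neighborFinset v, F w v = ∑ v, ∑ w ∈ G.neighborFinset v, F v w := by
  refine sum_comm' fun v w => ?_
  simp [G.adj_comm]

lemma IsDirichletEigenpair.sum_sq_pos (hf : IsDirichletEigenpair G lam f) :
    0 < ∑ v, f v ^ 2 := by
  obtain ⟨v, hv⟩ := Function.ne_iff.1 hf.1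
  exact sum_pos' (fun w _ => sq_nonneg (f w)) ⟨v, mem_univ v, sq_pos_of_ne_zero hv⟩

lemma IsDirichletEigenpair.mul_lapApply (hV : ∀ v, IsBoundary G v ∨ IsInterior G v)
    (hf : IsDirichletEigenpair G lam f) (v : V) : f v * lapApply G f v = lam * f v ^ 2 := by
  rcases hV v with hv | hv
  · rw [hf.2.1 v hv]
    ring
  · rw [hf.2.2 v hv]
    ring

lemma IsDirichletEigenpair.sub_mul_sum_sq_eq (hV : ∀ v, IsBoundary G v ∨ IsInterior G v)
    (hf : IsDirichletEigenpair G lam f) (μ : ℝ) (a : V → V → ℝ) :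
    (lam - μ) * ∑ v, f v ^ 2
      = ∑ v, f v ^ 2 * (G.degree v - μ - ∑ w ∈ G.neighborFinset v, a v w)
        + (∑ v, ∑ w ∈ G.neighborFinset v,
            (a v w * f v ^ 2 + a w v * f w ^ 2 - 2 * (f v * f w))) / 2 := by
  have hrayleigh : lam * ∑ v, f v ^ 2
      = ∑ v, G.degree v * f v ^ 2 - ∑ v, ∑ w ∈ G.neighborFinset v, f v * f w := by
    rw [mul_sum, ← sum_sub_distrib]
    refine sum_congr rfl fun v _ => ?_
    rw [← hf.mul_lapApply hV, lapApply, ← mul_sum]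
    ring
  have hdiag : ∑ v, f v ^ 2 * (G.degree v - μ - ∑ w ∈ G.neighborFinset v, a v w)
      = ∑ v, G.degree v * f v ^ 2 - μ * ∑ v, f v ^ 2
        - ∑ v, ∑ w ∈ G.neighborFinset v, a v w * f v ^ 2 := by
    rw [mul_sum, ← sum_sub_distrib, ← sum_sub_distrib]
    refine sum_congr rfl fun v _ => ?_
    rw [← sum_mul]
    ring
  have hswap := sum_neighborFinset_comm G fun v w => a v w * f v ^ 2
  have hedge : ∑ v, ∑ w ∈ G.neighborFinset v,
        (a v w * f v ^ 2 + a w v * f w ^ 2 - 2 * (f v * f w))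
      = 2 * ∑ v, ∑ w ∈ G.neighborFinset v, a v w * f v ^ 2
        - 2 * ∑ v, ∑ w ∈ G.neighborFinset v, f v * f w := by
    simp only [sum_sub_distrib, sum_add_distrib, hswap, ← mul_sum]
    ring
  rw [hdiag, hedge, sub_mul, hrayleigh]
  ring

lemma IsBartaWeight.diagonalTerm_nonneg (hV : ∀ v, IsBoundary G v ∨ IsInterior G v)
    (ha : IsBartaWeight G μ a) (hf : IsDirichletEigenpair G lam f) (v : V) :
    0 ≤ f v ^ 2 * (G.degree v - μ - ∑ w ∈ G.neighborFinset v, a v w) := by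
  rcases hV v with hv | hv
  · simp [hf.2.1 v hv]
  · exact mul_nonneg (sq_nonneg _) (sub_nonneg.2 (ha.sum_le hv))

lemma IsBartaWeight.edgeTerm_nonneg (hV : ∀ v, IsBoundary G v ∨ IsInterior G v)
    (ha : IsBartaWeight G μ a) (hf : IsDirichletEigenpair G lam f) {v w : V} (h : G.Adj v w) :
    0 ≤ a v w * f v ^ 2 + a w v * f w ^ 2 - 2 * (f v * f w) := by
  rcases hV v with hv | hv <;> rcases hV w with hw | hw
  · simp [hf.2.1 v hv, hf.2.1 w hw]
  · simpa [hf.2.1 v hv] using mul_nonneg (ha.nonneg h.symm hw) (sq_nonneg (f w))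
  · simpa [hf.2.1 w hw] using mul_nonneg (ha.nonneg h hv) (sq_nonneg (f v))
  · exact sub_nonneg.2
      (two_mul_mul_le_of_one_le_mul (ha.nonneg h hv) (ha.one_le_mul_swap h hv hw) _ _)

lemma IsBartaWeight.le_of_isDirichletEigenpair (hV : ∀ v, IsBoundary G v ∨ IsInterior G v)
    (ha : IsBartaWeight G μ a) (hf : IsDirichletEigenpair G lam f) : μ ≤ lam := by
  have hdiag := sum_nonneg fun v (_ : v ∈ univ) => ha.diagonalTerm_nonneg hV hf v
  have hedge := sum_nonneg fun v (_ : v ∈ univ) => sum_nonneg fun w hw =>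
    ha.edgeTerm_nonneg hV hf ((G.mem_neighborFinset v w).1 hw)
  have hmul : 0 ≤ (lam - μ) * ∑ v, f v ^ 2 := by
    rw [hf.sub_mul_sum_sq_eq hV μ a]
    linarith
  exact sub_nonneg.1 (nonneg_of_mul_nonneg_left hmul hf.sum_sq_pos)

lemma IsBartaWeight.terms_eq_zero (hV : ∀ v, IsBoundary G v ∨ IsInterior G v)
    (ha : IsBartaWeight G μ a) (hf : IsDirichletEigenpair G μ f) :
    (∀ v, f v ^ 2 * (G.degree v - μ - ∑ w ∈ G.neighborFinset v, a v w) = 0) ∧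
      ∀ v w, G.Adj v w → a v w * f v ^ 2 + a w v * f w ^ 2 - 2 * (f v * f w) = 0 := by
  have hdiag := fun v (_ : v ∈ univ) => ha.diagonalTerm_nonneg hV hf v
  have hedge := fun v w (hw : w ∈ G.neighborFinset v) =>
    ha.edgeTerm_nonneg hV hf ((G.mem_neighborFinset v w).1 hw)
  have hedges := fun v (_ : v ∈ univ) => sum_nonneg (hedge v)
  have hzero := hf.sub_mul_sum_sq_eq hV μ a
  rw [sub_self, zero_mul] at hzero
  have hdiag_sum := sum_nonneg hdiag
  have hedge_sum := sum_nonneg hedges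
  refine ⟨fun v => (sum_eq_zero_iff_of_nonneg hdiag).1 (by linarith) v (mem_univ v),
    fun v w h => ?_⟩
  have hv := (sum_eq_zero_iff_of_nonneg hedges).1 (by linarith) v (mem_univ v)
  exact (sum_eq_zero_iff_of_nonneg (hedge v)).1 hv w ((G.mem_neighborFinset v w).2 h)

lemma IsBartaWeight.eq_zero_of_adj (hV : ∀ v, IsBoundary G v ∨ IsInterior G v)
    (ha : IsBartaWeight G μ a) (hf : IsDirichletEigenpair G μ f) {v w : V} (h : G.Adj v w)
    (hv : IsInterior G v) (hfv : f v = 0) : f w = 0 := by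
  rcases hV w with hw | hw
  · exact hf.2.1 w hw
  have hedge := (ha.terms_eq_zero hV hf).2 v w h
  have hmul : a w v * f w ^ 2 = 0 := by simpa [hfv] using hedge
  have hne : a w v ≠ 0 := fun h0 => by
    have := ha.one_le_mul_swap h hv hw
    rw [h0, mul_zero] at this
    linarith
  simpa [hne] using hmul

lemma forall_of_adj_isInterior (hG : G.Connected) (hV : ∀ v, IsBoundary G v ∨ IsInterior G v)
    {P : V → Prop} {b : V} (hb : IsInterior G b) (hPb : P b)
    (hP : ∀ v w, G.Adj v w → IsInterior G v → P v → P w) (v : V) : P v := by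
  have hmain : ∀ k v, G.dist v b = k → P v := by
    intro k
    induction k with
    | zero => exact fun v hv => (hG.dist_eq_zero_iff.1 hv) ▸ hPb
    | succ k ih =>
      intro v hv
      obtain ⟨p, hvp, hp⟩ := exists_adj_dist_add_one_eq hG
        (show v ≠ b by rintro rfl; simp at hv)
      -- A boundary vertex `p ≠ b` has its only neighbour closer to `b`, which is not `v`.
      refine hP p v hvp.symm ((hV p).resolve_left fun hpb => ?_) (ih p (by omega))
      by_cases hpb' : p = b
      · subst hpb'
        simp only [IsBoundary, IsInterior] at hpb hb
        omega
      obtain ⟨q, hpq, hq⟩ := exists_adj_dist_add_one_eq hG hpb'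
      have hqv : q = v :=
        (G.degree_eq_one_iff_existsUnique_adj.1 hpb).unique hpq hvp.symm
      rw [hqv] at hq
      omega
  exact hmain _ v rfl

lemma IsBartaWeight.lt_of_isDirichletEigenpair (hG : G.Connected)
    (hV : ∀ v, IsBoundary G v ∨ IsInterior G v) (ha : IsBartaWeight G μ a)
    (hf : IsDirichletEigenpair G lam f) {b : V} (hb : IsInterior G b)
    (hlt : ∑ w ∈ G.neighborFinset b, a b w < G.degree b - μ) : μ < lam := by
  refine (ha.le_of_isDirichletEigenpair hV hf).lt_of_ne ?_
  rintro rfl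
  have hfb : f b = 0 := by
    have := (ha.terms_eq_zero hV hf).1 b
    simpa [(sub_pos.2 hlt).ne'] using this
  exact hf.1 (funext (forall_of_adj_isInterior hG hV hb hfb fun v w h hv hfv =>
    ha.eq_zero_of_adj hV hf h hv hfv))

end BartaWeights

section DirichletSpectrum

variable {V : Type*} [Fintype V] {G : SimpleGraph V} {μ : ℝ} {f : V → ℝ}

/-- The Dirichlet operator `Δ₀(G)`: the Laplacian matrix without the rows and columns of the
vertices that are not interior. -/
def dirichletMatrix (G : SimpleGraph V) : Matrix {v // IsInterior G v} {v // IsInterior G v} ℝ :=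
  (G.lapMatrix ℝ).submatrix Subtype.val Subtype.val

lemma isHermitian_dirichletMatrix (G : SimpleGraph V) : (dirichletMatrix G).IsHermitian :=
  (G.isHermitian_lapMatrix ℝ).submatrix Subtype.val

lemma IsBoundary.not_isInterior {v : V} (hv : IsBoundary G v) : ¬ IsInterior G v := by
  unfold IsBoundary at hv
  unfold IsInterior
  omega

lemma dirichletMatrix_mulVec_apply (hf : ∀ v, ¬ IsInterior G v → f v = 0)
    (i : {v // IsInterior G v}) :
    (dirichletMatrix G).mulVec (fun j => f j) i = lapApply G f i := by
  have hsum : (dirichletMatrix G).mulVec (fun j => f j) i = (G.lapMatrix ℝ).mulVec f i := by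
    simp only [Matrix.mulVec, dotProduct, dirichletMatrix, Matrix.submatrix_apply]
    rw [← sum_subtype {v | IsInterior G v} (by simp) fun v => G.lapMatrix ℝ i v * f v,
      sum_filter_of_ne]
    intro v _ hv
    by_contra hvi
    exact hv (by rw [hf v hvi, mul_zero])
  rw [hsum, SimpleGraph.lapMatrix_mulVec_apply, lapApply]

lemma exists_isDirichletEigenpair_iff (hV : ∀ v, IsBoundary G v ∨ IsInterior G v) :
    (∃ f, IsDirichletEigenpair G μ f) ↔
      Module.End.HasEigenvalue (Matrix.toLin' (dirichletMatrix G)) μ := by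
  constructor
  · rintro ⟨f, hf0, hfb, hfi⟩
    have hf : ∀ v, ¬ IsInterior G v → f v = 0 := fun v hv => hfb v ((hV v).resolve_right hv)
    refine Module.End.hasEigenvalue_of_hasEigenvector (x := fun j => f j)
      ⟨Module.End.mem_eigenspace_iff.2 (funext fun i => ?_), fun h => hf0 (funext fun v => ?_)⟩
    · rw [Matrix.toLin'_apply, dirichletMatrix_mulVec_apply hf, hfi i i.2]
      rfl
    · by_cases hv : IsInterior G v
      · exact congrFun h ⟨v, hv⟩
      · exact hf v hv
  · intro hμ
    obtain ⟨x, hx, hx0⟩ := hμ.exists_hasEigenvector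
    rw [Module.End.mem_eigenspace_iff, Matrix.toLin'_apply] at hx
    set f : V → ℝ := fun v => if h : IsInterior G v then x ⟨v, h⟩ else 0 with hf_def
    have hfx : (fun j : {v // IsInterior G v} => f j) = x := by
      funext j
      simp [hf_def, j.2]
    have hf : ∀ v, ¬ IsInterior G v → f v = 0 := fun v hv => by simp [hf_def, hv]
    refine ⟨f, fun h0 => hx0 ?_, fun v hv => hf v hv.not_isInterior, fun v hv => ?_⟩
    · rw [← hfx, h0]
      rfl
    · rw [← dirichletMatrix_mulVec_apply hf ⟨v, hv⟩, hfx, hx, ← hfx]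
      rfl

lemma finite_setOf_isDirichletEigenpair (hV : ∀ v, IsBoundary G v ∨ IsInterior G v) :
    {μ : ℝ | ∃ f, IsDirichletEigenpair G μ f}.Finite := by
  simp only [exists_isDirichletEigenpair_iff hV]
  exact Module.End.finite_hasEigenvalue _

lemma nonempty_setOf_isDirichletEigenpair (hV : ∀ v, IsBoundary G v ∨ IsInterior G v)
    (hI : ∃ v, IsInterior G v) : {μ : ℝ | ∃ f, IsDirichletEigenpair G μ f}.Nonempty := by
  obtain ⟨v, hv⟩ := hI
  refine ⟨(isHermitian_dirichletMatrix G).eigenvalues ⟨v, hv⟩,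
    (exists_isDirichletEigenpair_iff hV).2 (Module.End.hasEigenvalue_iff_mem_spectrum.2 ?_)⟩
  rw [Matrix.spectrum_toLin']
  exact (isHermitian_dirichletMatrix G).eigenvalues_mem_spectrum_real _

lemma exists_isDirichletEigenpair_dirichletLambda (hV : ∀ v, IsBoundary G v ∨ IsInterior G v)
    (hI : ∃ v, IsInterior G v) : ∃ f, IsDirichletEigenpair G (dirichletLambda G) f :=
  (nonempty_setOf_isDirichletEigenpair hV hI).csInf_mem (finite_setOf_isDirichletEigenpair hV)

lemma IsDirichletEigenpair.dirichletLambda_le (hV : ∀ v, IsBoundary G v ∨ IsInterior G v)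
    (hf : IsDirichletEigenpair G μ f) : dirichletLambda G ≤ μ :=
  csInf_le (finite_setOf_isDirichletEigenpair hV).bddBelow ⟨f, hf⟩

end DirichletSpectrum

section Isomorphisms

variable {V W : Type*} [Fintype V] [Fintype W] {G : SimpleGraph V} {H : SimpleGraph W}

lemma lapApply_comp_iso (e : G ≃g H) (f : W → ℝ) (v : V) :
    lapApply G (f ∘ e) v = lapApply H f (e v) := by
  have hsum : ∑ w ∈ G.neighborFinset v, f (e w) = ∑ w ∈ H.neighborFinset (e v), f w :=
    sum_equiv e.toEquiv (by simp [e.map_adj_iff]) fun _ _ => rfl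
  simp only [lapApply, Function.comp_apply, hsum, e.degree_eq]

lemma IsDirichletEigenpair.comp_iso (e : G ≃g H) {μ : ℝ} {f : W → ℝ}
    (hf : IsDirichletEigenpair H μ f) : IsDirichletEigenpair G μ (f ∘ e) := by
  obtain ⟨hf0, hfb, hfi⟩ := hf
  refine ⟨fun h => hf0 (e.surjective.injective_comp_right h), fun v hv => hfb _ ?_,
    fun v hv => ?_⟩
  · rwa [IsBoundary, e.degree_eq]
  · rw [lapApply_comp_iso]
    exact hfi _ (by rwa [IsInterior, e.degree_eq])

lemma dirichletLambda_congr (e : G ≃g H) : dirichletLambda G = dirichletLambda H := by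
  rw [dirichletLambda, dirichletLambda]
  congr 1
  ext μ
  exact ⟨fun ⟨_, hf⟩ => ⟨_, hf.comp_iso e.symm⟩, fun ⟨_, hf⟩ => ⟨_, hf.comp_iso e⟩⟩

end Isomorphisms

section Paths

variable {V : Type*} [Fintype V] {G : SimpleGraph V} {n : ℕ}

lemma dist_injective_of_degree_le_two (hG : G.Connected) {r : V} (hr : IsBoundary G r)
    (hdeg : ∀ v, G.degree v ≤ 2) :
    Function.Injective (G.dist r) := by
  have hmain : ∀ k v w, G.dist v r = k → G.dist w r = k → v = w := by
    intro k
    induction k with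
    | zero =>
      intro v w hv hw
      exact (hG.dist_eq_zero_iff.1 hv).trans (hG.dist_eq_zero_iff.1 hw).symm
    | succ k ih =>
      intro v w hv hw
      obtain ⟨p, hvp, hp⟩ := exists_adj_dist_add_one_eq hG
        (show v ≠ r by rintro rfl; simp at hv)
      obtain ⟨p', hwp, hp'⟩ := exists_adj_dist_add_one_eq hG
        (show w ≠ r by rintro rfl; simp at hw)
      obtain rfl : p = p' := ih p p' (by omega) (by omega)
      by_cases hpr : p = r
      · subst hpr
        exact (G.degree_eq_one_iff_existsUnique_adj.1 hr).unique hvp.symm hwp.symm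
      · obtain ⟨q, hpq, hq⟩ := exists_adj_dist_add_one_eq hG hpr
        by_contra hvw
        have hcard : #{v, w, q} = 3 :=
          card_eq_three.2 ⟨v, w, q, hvw, by rintro rfl; omega, by rintro rfl; omega, rfl⟩
        have hsub : {v, w, q} ⊆ G.neighborFinset p := by
          simp [insert_subset_iff, hvp.symm, hwp.symm, hpq]
        have hle := card_le_card hsub
        rw [hcard, SimpleGraph.card_neighborFinset_eq_degree] at hle
        exact absurd (hdeg p) (by omega)
  intro v w h
  exact hmain _ v w rfl (by rw [G.dist_comm, ← h, G.dist_comm])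

lemma nonempty_iso_pathGraph_of_degree_le_two (hG : G.Connected) {r : V}
    (hr : IsBoundary G r) (hdeg : ∀ v, G.degree v ≤ 2) :
    Nonempty (G ≃g SimpleGraph.pathGraph (Fintype.card V)) := by
  have hinj := dist_injective_of_degree_le_two hG hr hdeg
  have hlt : ∀ v, G.dist r v < Fintype.card V := fun v => by
    obtain ⟨p, hp, hlen⟩ := hG.exists_path_of_dist r v
    exact hlen ▸ hp.length_lt
  have hbij : Function.Bijective fun v => (⟨G.dist r v, hlt v⟩ : Fin (Fintype.card V)) :=
    (Fintype.bijective_iff_injective_and_card _).2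
      ⟨fun v w h => hinj (congrArg Fin.val h), by simp⟩
  have hadj : ∀ v w, G.dist r v + 1 = G.dist r w → G.Adj v w := by
    intro v w h
    obtain ⟨p, hwp, hp⟩ := exists_adj_dist_add_one_eq hG
      (show w ≠ r by rintro rfl; simp at h)
    rw [G.dist_comm, G.dist_comm (u := w)] at hp
    obtain rfl : v = p := hinj (by omega)
    exact hwp.symm
  refine ⟨⟨Equiv.ofBijective _ hbij, fun {v w} => ?_⟩⟩
  rw [SimpleGraph.pathGraph_adj]
  refine ⟨?_, fun h => ?_⟩
  · rintro (h | h)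
    · exact hadj v w h
    · exact (hadj w v h).symm
  · have hne : G.dist r v ≠ G.dist r w := hinj.ne h.ne
    have hdiff := h.diff_dist_adj (u := r)
    simp only [Equiv.ofBijective_apply]
    omega

lemma neighborFinset_pathGraph {k : ℕ} (h0 : 0 < k) (h1 : k + 1 < n) :
    (SimpleGraph.pathGraph n).neighborFinset ⟨k, by omega⟩
      = {⟨k - 1, by omega⟩, ⟨k + 1, h1⟩} := by
  ext w
  simp only [SimpleGraph.mem_neighborFinset, SimpleGraph.pathGraph_adj, mem_insert,
    mem_singleton, Fin.ext_iff]
  omega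

lemma degree_pathGraph_eq_two {k : ℕ} (h0 : 0 < k) (h1 : k + 1 < n) :
    (SimpleGraph.pathGraph n).degree ⟨k, by omega⟩ = 2 := by
  rw [← SimpleGraph.card_neighborFinset_eq_degree, neighborFinset_pathGraph h0 h1, card_pair]
  simp only [ne_eq, Fin.mk.injEq]
  omega

lemma isBoundary_pathGraph (hn : 2 ≤ n) {v : Fin n} (hv : v.val = 0 ∨ v.val + 1 = n) :
    IsBoundary (SimpleGraph.pathGraph n) v := by
  obtain ⟨u, hu⟩ : ∃ u : Fin n, v.val + 1 = u.val ∨ u.val + 1 = v.val := by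
    rcases hv with hv | hv
    · exact ⟨⟨1, by omega⟩, Or.inl (by simp only; omega)⟩
    · exact ⟨⟨n - 2, by omega⟩, Or.inr (by simp only; omega)⟩
  refine SimpleGraph.degree_eq_one_iff_existsUnique_adj.2
    ⟨u, SimpleGraph.pathGraph_adj.2 hu, fun w hw => Fin.ext ?_⟩
  have hw' := SimpleGraph.pathGraph_adj.1 hw
  omega

lemma degree_pathGraph_le_two (v : Fin n) : (SimpleGraph.pathGraph n).degree v ≤ 2 := by
  by_cases h0 : 0 < v.val
  · by_cases h1 : v.val + 1 < n
    · exact (degree_pathGraph_eq_two h0 h1).le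
    · exact (isBoundary_pathGraph (by omega) (Or.inr (by omega))).trans_le one_le_two
  · obtain hn | hn := lt_or_ge n 2
    · exact ((SimpleGraph.pathGraph n).degree_lt_card_verts v).le.trans
        (by rw [Fintype.card_fin]; omega)
    · exact (isBoundary_pathGraph hn (Or.inl (by omega))).trans_le one_le_two

lemma isTree_pathGraph (hn : 2 ≤ n) : (SimpleGraph.pathGraph n).IsTree := by
  obtain ⟨m, rfl⟩ : ∃ m, n = m + 1 := ⟨n - 1, by omega⟩
  have : Nontrivial (Fin (m + 1)) := Fin.nontrivial_iff_two_le.2 hn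
  -- A spanning tree of the path has no branching vertex either, so it is itself a path.
  obtain ⟨T, hle, hT⟩ := (SimpleGraph.pathGraph_connected m).exists_isTree_le
  obtain ⟨r, hr⟩ := hT.exists_vert_degree_one_of_nontrivial
  have hdeg : ∀ v, T.degree v ≤ 2 := fun v =>
    (SimpleGraph.degree_le_of_le hle).trans (degree_pathGraph_le_two v)
  obtain ⟨e⟩ := nonempty_iso_pathGraph_of_degree_le_two hT.connected (r := r)
    (by unfold IsBoundary; convert hr) hdeg
  rw [Fintype.card_fin] at e
  exact e.isTree_iff.1 hT

lemma isTreeWithBoundary_pathGraph (hn : 3 ≤ n) :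
    IsTreeWithBoundary (SimpleGraph.pathGraph n) :=
  ⟨isTree_pathGraph (by omega),
    ⟨_, (degree_pathGraph_eq_two one_pos (show 1 + 1 < n by omega)).ge⟩,
    ⟨⟨0, by omega⟩, isBoundary_pathGraph (by omega) (Or.inl rfl)⟩⟩

lemma isDirichletEigenpair_pathGraph (hn : 3 ≤ n) :
    IsDirichletEigenpair (SimpleGraph.pathGraph n) (2 - 2 * Real.cos (stepAngle (Fin n)))
      fun v => Real.sin (v.val * stepAngle (Fin n)) := by
  have : Nontrivial (Fin n) := Fin.nontrivial_iff_two_le.2 (by omega)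
  set θ := stepAngle (Fin n)
  have hθ : ((n : ℝ) - 1) * θ = Real.pi := by
    simpa using card_sub_one_mul_stepAngle (V := Fin n)
  have hθ_pos : 0 < θ := stepAngle_pos
  have hθ_lt : θ < Real.pi := by
    have hn' : (3 : ℝ) ≤ n := by exact_mod_cast hn
    rw [← hθ]
    exact lt_mul_of_one_lt_left hθ_pos (by linarith)
  have hend : ∀ v : Fin n, v.val = 0 ∨ v.val + 1 = n → Real.sin (v.val * θ) = 0 := by
    rintro v (hv | hv)
    · simp [hv]
    · have hv' : (v.val : ℝ) + 1 = n := by exact_mod_cast hv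
      rw [eq_sub_of_add_eq hv', hθ, Real.sin_pi]
  refine ⟨fun h => ?_, fun v hv => hend v ?_, fun v hv => ?_⟩
  · have h1 := congrFun h ⟨1, by omega⟩
    simp only [Nat.cast_one, one_mul, Pi.zero_apply] at h1
    exact (Real.sin_pos_of_pos_of_lt_pi hθ_pos hθ_lt).ne' h1
  · by_contra! hv'
    exact hv.not_isInterior (degree_pathGraph_eq_two (by omega) (by omega)).ge
  · obtain ⟨k, hk⟩ := v
    have hk' : 0 < k ∧ k + 1 < n := by
      by_contra hk'
      exact (isBoundary_pathGraph (by omega) (v := ⟨k, hk⟩)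
        (by simp only; omega)).not_isInterior hv
    obtain ⟨h0, h1⟩ := hk'
    rw [lapApply, degree_pathGraph_eq_two h0 h1, neighborFinset_pathGraph h0 h1,
      sum_pair (by simp only [ne_eq, Fin.mk.injEq]; omega)]
    simp only [Nat.cast_sub h0, Nat.cast_add, Nat.cast_one, sub_mul, add_mul, one_mul,
      Real.sin_add, Real.sin_sub]
    push_cast
    ring

end Paths

section FaberKrahn

variable {V : Type*} [Fintype V] {G : SimpleGraph V}

lemma IsTreeWithBoundary.nontrivial (hG : IsTreeWithBoundary G) : Nontrivial V := by
  obtain ⟨-, ⟨a, ha⟩, b, hb⟩ := hG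
  exact ⟨a, b, fun h => hb.not_isInterior (h ▸ ha)⟩

lemma IsTreeWithBoundary.isBoundary_or_isInterior (hG : IsTreeWithBoundary G) (v : V) :
    IsBoundary G v ∨ IsInterior G v := by
  have := hG.nontrivial
  have hpos := hG.1.connected.preconnected.degree_pos_of_nontrivial v
  unfold IsBoundary IsInterior
  omega

lemma isBartaWeight_branchWeight [Nontrivial V] (hG : G.IsTree) :
    IsBartaWeight G (2 - 2 * Real.cos (stepAngle V)) (branchWeight G) where
  nonneg h hv := branchWeight_nonneg hG hv h
  one_le_mul_swap h hv hw := (branchWeight_mul_branchWeight_swap hG hv hw h).ge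
  sum_le {v} hv := by
    have hdeg : (2 : ℝ) ≤ G.degree v := by exact_mod_cast hv
    have hprod : 0 ≤ (G.degree v - 2) * (1 - Real.cos (stepAngle V)) :=
      mul_nonneg (by linarith) (by linarith [cos_stepAngle_lt_one (V := V)])
    linarith [sum_branchWeight_le hG hv]

theorem IsTreeWithBoundary.le_dirichletLambda (hG : IsTreeWithBoundary G) :
    2 - 2 * Real.cos (stepAngle V) ≤ dirichletLambda G := by
  have := hG.nontrivial
  have hV := hG.isBoundary_or_isInterior
  obtain ⟨f, hf⟩ := exists_isDirichletEigenpair_dirichletLambda hV hG.2.1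
  exact (isBartaWeight_branchWeight hG.1).le_of_isDirichletEigenpair hV hf

lemma IsTreeWithBoundary.lt_dirichletLambda_of_three_le_degree (hG : IsTreeWithBoundary G) {b : V}
    (hb : 3 ≤ G.degree b) : 2 - 2 * Real.cos (stepAngle V) < dirichletLambda G := by
  have := hG.nontrivial
  have hV := hG.isBoundary_or_isInterior
  obtain ⟨f, hf⟩ := exists_isDirichletEigenpair_dirichletLambda hV hG.2.1
  have hbi : IsInterior G b := (Nat.le_succ 2).trans hb
  refine (isBartaWeight_branchWeight hG.1).lt_of_isDirichletEigenpair hG.1.connected hV hf hbi ?_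
  have hdeg : (3 : ℝ) ≤ G.degree b := by exact_mod_cast hb
  have hprod : 0 < (G.degree b - 2) * (1 - Real.cos (stepAngle V)) :=
    mul_pos (by linarith) (by linarith [cos_stepAngle_lt_one (V := V)])
  linarith [sum_branchWeight_le hG.1 hbi]

lemma dirichletLambda_pathGraph {n : ℕ} (hn : 3 ≤ n) :
    dirichletLambda (SimpleGraph.pathGraph n) = 2 - 2 * Real.cos (stepAngle (Fin n)) :=
  have hP := isTreeWithBoundary_pathGraph hn
  le_antisymm ((isDirichletEigenpair_pathGraph hn).dirichletLambda_le hP.isBoundary_or_isInterior)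
    hP.le_dirichletLambda

theorem IsTreeWithBoundary.dirichletLambda_eq_iff (hG : IsTreeWithBoundary G) :
    dirichletLambda G = 2 - 2 * Real.cos (stepAngle V) ↔
      Nonempty (G ≃g SimpleGraph.pathGraph (Fintype.card V)) := by
  constructor
  · intro h
    obtain ⟨r, hr⟩ := hG.2.2
    refine nonempty_iso_pathGraph_of_degree_le_two hG.1.connected hr fun v => ?_
    by_contra! hv
    exact (hG.lt_dirichletLambda_of_three_le_degree hv).ne' h
  · rintro ⟨e⟩
    obtain ⟨v, hv⟩ := hG.2.1
    have hcard : 3 ≤ Fintype.card V := Nat.lt_of_le_of_lt hv (G.degree_lt_card_verts v)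
    rw [dirichletLambda_congr e, dirichletLambda_pathGraph hcard, stepAngle, stepAngle,
      Fintype.card_fin]

end FaberKrahn

/-- **Theorem.** A tree `G` has the Faber-Krahn property in the class
`T^(n,·)` of all trees with boundary with `n` vertices (arbitrary number of
interior vertices) if and only if `G` is a path with `n` vertices; `G` is then
uniquely determined up to isomorphism. -/
theorem faberKrahn_allTrees (n : ℕ) (hn : 3 ≤ n)
    (G : SimpleGraph (Fin n)) (hG : IsTreeWithBoundary G) :
    (∀ G' : SimpleGraph (Fin n), IsTreeWithBoundary G' →
        dirichletLambda G ≤ dirichletLambda G')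
      ↔ Nonempty (G ≃g SimpleGraph.pathGraph n) := by
  have hiff := hG.dirichletLambda_eq_iff
  rw [Fintype.card_fin] at hiff
  rw [← hiff]
  constructor
  · intro hmin
    have hle := hmin _ (isTreeWithBoundary_pathGraph hn)
    rw [dirichletLambda_pathGraph hn] at hle
    exact le_antisymm hle hG.le_dirichletLambda
  · intro hpath G' hG'
    exact hpath.trans_le hG'.le_dirichletLambda

end FK
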